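/- arXiv:2201.08003 — 2 statements merged into one kernel-verified Lean document; each statement's English description precedes it below -/
import Mathlib

section
/- Let B ∈ R^{K×m} have full row rank K, P_B = B^T(BB^T)^{-1}B, and Θ ∈ R^{p×m}. Then for any j, ‖Θ P_B e_j‖_1 ≤ ‖Θ‖_{1,1} · (max_{1≤ℓ≤m} ‖B_ℓ‖_2^2) / λ_K(BB^T), where ‖Θ‖_{1,1} = Σ_{i=1}^p ‖Θ_{i·}‖_1, B_ℓ are the columns of B, and λ_K(BB^T) is the smallest eigenvalue of BB^T. -/
/-!
Write `G = B Bᵀ`, `P = Bᵀ G⁻¹ B` and `μ` for the least eigenvalue of `G`. It suffices to bound the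
entries of `P`, since `‖Θ P e_j‖₁ ≤ ∑ i l, |Θ i l| |P l j|`. Now `P l j = ⟨B_l, w⟩` with
`w = G⁻¹ B_j`, and `μ ‖w‖² ≤ ⟨w, G w⟩ = ⟨w, B_j⟩ ≤ ‖w‖ ‖B_j‖` gives `‖w‖ ≤ ‖B_j‖ / μ`
(`mul_l2norm_le`). By Cauchy–Schwarz, `|P l j| ≤ ‖B_l‖ ‖B_j‖ / μ ≤ max_ℓ ‖B_ℓ‖² / μ`. Full row rank
makes `G` positive definite, so `G` is invertible and `μ > 0`.
-/

open Matrix MeasureTheory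

noncomputable def l1norm {p : ℕ} (v : Fin p → ℝ) : ℝ := ∑ i, |v i|
noncomputable def l2norm {p : ℕ} (v : Fin p → ℝ) : ℝ := Real.sqrt (∑ i, v i ^ 2)
noncomputable def linfnorm {p : ℕ} (v : Fin p → ℝ) : ℝ := ⨆ i, |v i|

/-- ℓ2→ℓ2 operator norm of a real matrix. -/
noncomputable def opNorm {n m : ℕ} (A : Matrix (Fin n) (Fin m) ℝ) : ℝ :=
  ‖LinearMap.toContinuousLinearMap (Matrix.toEuclideanLin A)‖

noncomputable def sortedDesc {n : ℕ} (f : Fin n → ℝ) : Fin n → ℝ :=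
  fun i => (f ∘ Tuple.sort f) i.rev

open Classical in
/-- `eigDesc A k` is the (k+1)-th largest eigenvalue of a real symmetric matrix `A`
(and `0` if `A` is not symmetric). -/
noncomputable def eigDesc {n : ℕ} (A : Matrix (Fin n) (Fin n) ℝ) : Fin n → ℝ :=
  if h : A.IsHermitian then sortedDesc h.eigenvalues else 0

/-- `singDesc A k` is the (k+1)-th largest singular value of `A`. -/
noncomputable def singDesc {n m : ℕ} (A : Matrix (Fin n) (Fin m) ℝ) : Fin m → ℝ :=
  fun k => Real.sqrt (eigDesc (Aᵀ * A) k)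

lemma l2norm_nonneg {n : ℕ} (v : Fin n → ℝ) : 0 ≤ l2norm v := Real.sqrt_nonneg _

lemma l2norm_sq {n : ℕ} (v : Fin n → ℝ) : l2norm v ^ 2 = v ⬝ᵥ v := by
  rw [l2norm, Real.sq_sqrt (Finset.sum_nonneg fun i _ => sq_nonneg _)]
  simp [dotProduct, sq]

lemma abs_dotProduct_le {n : ℕ} (v w : Fin n → ℝ) : |v ⬝ᵥ w| ≤ l2norm v * l2norm w := by
  apply abs_le_of_sq_le_sq _ (mul_nonneg (l2norm_nonneg v) (l2norm_nonneg w))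
  rw [mul_pow, l2norm, l2norm, Real.sq_sqrt (Finset.sum_nonneg fun i _ => sq_nonneg _),
    Real.sq_sqrt (Finset.sum_nonneg fun i _ => sq_nonneg _)]
  exact Finset.sum_mul_sq_le_sq_mul_sq _ _ _

/-- The last entry of the decreasing rearrangement is a minimum of the family. -/
lemma sortedDesc_last_le {n : ℕ} (hn : n - 1 < n) (f : Fin n → ℝ) (i : Fin n) :
    sortedDesc f ⟨n - 1, hn⟩ ≤ f i := by
  have h := Tuple.monotone_sort f
    (show (Fin.rev ⟨n - 1, hn⟩ : Fin n) ≤ (Tuple.sort f).symm i by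
      rw [Fin.le_def, Fin.val_rev]
      dsimp only
      omega)
  simpa [sortedDesc] using h

lemma eigDesc_last_pos {n : ℕ} (hn : n - 1 < n) {A : Matrix (Fin n) (Fin n) ℝ} (hA : A.PosDef) :
    0 < eigDesc A ⟨n - 1, hn⟩ := by
  rw [eigDesc, dif_pos hA.1]
  exact hA.eigenvalues_pos _

/-- The Rayleigh quotient of a symmetric matrix is at least its least eigenvalue: subtracting that
eigenvalue shifts the spectrum into the nonnegative reals. -/
lemma eigDesc_last_mul_le {n : ℕ} (hn : n - 1 < n) {A : Matrix (Fin n) (Fin n) ℝ}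
    (hA : A.IsHermitian) (x : Fin n → ℝ) :
    eigDesc A ⟨n - 1, hn⟩ * (x ⬝ᵥ x) ≤ x ⬝ᵥ A *ᵥ x := by
  rw [eigDesc, dif_pos hA]
  set c := sortedDesc hA.eigenvalues ⟨n - 1, hn⟩ with hc
  have hH : (A - algebraMap ℝ (Matrix (Fin n) (Fin n) ℝ) c).IsHermitian := by
    apply hA.sub
    rw [Algebra.algebraMap_eq_smul_one]
    simp [IsHermitian]
  have hP : (A - algebraMap ℝ (Matrix (Fin n) (Fin n) ℝ) c).PosSemidef := by
    rw [hH.posSemidef_iff_eigenvalues_nonneg]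
    intro i
    have h := hH.eigenvalues_mem_spectrum_real i
    rw [← spectrum.sub_singleton_eq, hA.spectrum_real_eq_range_eigenvalues] at h
    obtain ⟨_, ⟨k, rfl⟩, _, rfl, hk⟩ := Set.mem_sub.1 h
    have := sortedDesc_last_le hn hA.eigenvalues k
    simp only [Pi.zero_apply]
    linarith
  have h := hP.re_dotProduct_nonneg x
  simp only [Algebra.algebraMap_eq_smul_one, sub_mulVec, smul_mulVec, one_mulVec, dotProduct_sub,
    dotProduct_smul, star_trivial, smul_eq_mul, RCLike.re_to_real] at h
  linarith

/-- A lower bound on how much `A` stretches vectors, from the Rayleigh quotient bound and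
Cauchy–Schwarz applied to `⟨w, A w⟩`. -/
lemma mul_l2norm_le {n : ℕ} (hn : n - 1 < n) {A : Matrix (Fin n) (Fin n) ℝ}
    (hA : A.IsHermitian) (w : Fin n → ℝ) :
    eigDesc A ⟨n - 1, hn⟩ * l2norm w ≤ l2norm (A *ᵥ w) := by
  rcases (l2norm_nonneg w).eq_or_lt with h0 | h0
  · rw [← h0, mul_zero]
    exact l2norm_nonneg _
  · have h1 := eigDesc_last_mul_le hn hA w
    have h2 := (le_abs_self _).trans (abs_dotProduct_le w (A *ᵥ w))
    rw [← l2norm_sq] at h1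
    refine le_of_mul_le_mul_left ?_ h0
    linarith

lemma posDef_mul_transpose {K m : ℕ} (B : Matrix (Fin K) (Fin m) ℝ) (hB : B.rank = K) :
    (B * Bᵀ).PosDef := by
  rw [← conjTranspose_eq_transpose_of_trivial]
  apply PosDef.mul_conjTranspose_self
  rw [vecMul_injective_iff, linearIndependent_iff_card_eq_finrank_span, Fintype.card_fin,
    Set.finrank, ← rank_eq_finrank_span_row, hB]

/-- `‖Θ P_B e_j‖₁ ≤ ‖Θ‖_{1,1} · max_ℓ ‖B_ℓ‖₂² / λ_K(BBᵀ)`. -/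
theorem stmt5 (p m K : ℕ) (hK : 0 < K) (hKm : K ≤ m)
    (Θ : Matrix (Fin p) (Fin m) ℝ) (B : Matrix (Fin K) (Fin m) ℝ) (hB : B.rank = K)
    (j : Fin m) :
    l1norm ((Θ * (Bᵀ * (B * Bᵀ)⁻¹ * B)).mulVec (Pi.single j 1)) ≤
      (∑ i, l1norm (fun l => Θ i l)) * (⨆ l : Fin m, (l2norm (fun k => B k l)) ^ 2) /
        eigDesc (B * Bᵀ) ⟨K - 1, by omega⟩ := by
  have hn : K - 1 < K := by omega
  have hG := posDef_mul_transpose B hB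
  have hpos := eigDesc_last_pos hn hG
  set c := eigDesc (B * Bᵀ) ⟨K - 1, hn⟩ with hc
  set M := ⨆ l : Fin m, (l2norm (fun k => B k l)) ^ 2 with hM
  have hle (l : Fin m) : l2norm (fun k => B k l) ^ 2 ≤ M :=
    le_ciSup (f := fun l => l2norm (fun k => B k l) ^ 2) (Set.finite_range _).bddAbove l
  set w := (B * Bᵀ)⁻¹ *ᵥ (fun k => B k j) with hw
  have hGw : (B * Bᵀ) *ᵥ w = fun k => B k j := by
    rw [hw, mulVec_mulVec, mul_nonsing_inv _ hG.det_pos.ne'.isUnit, one_mulVec]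
  have hwle : c * l2norm w ≤ l2norm (fun k => B k j) := by
    simpa only [hGw] using mul_l2norm_le hn hG.1 w
  have hPe : (Bᵀ * (B * Bᵀ)⁻¹ * B) *ᵥ Pi.single j 1 = Bᵀ *ᵥ w := by
    rw [← mulVec_mulVec, mulVec_single_one, ← mulVec_mulVec]
    rfl
  have hentry (l : Fin m) : |(Bᵀ *ᵥ w) l| ≤ M / c := by
    rw [le_div_iff₀ hpos]
    have h1 : |(Bᵀ *ᵥ w) l| ≤ l2norm (fun k => B k l) * l2norm w := abs_dotProduct_le _ _
    have h2 := mul_le_mul_of_nonneg_right h1 hpos.le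
    have h3 := mul_le_mul_of_nonneg_left hwle (l2norm_nonneg fun k => B k l)
    -- AM–GM: `‖B_l‖ ‖B_j‖ ≤ (‖B_l‖² + ‖B_j‖²) / 2 ≤ M`.
    nlinarith [hle l, hle j, sq_nonneg (l2norm (fun k => B k l) - l2norm (fun k => B k j))]
  rw [← mulVec_mulVec, hPe, mul_div_assoc, l1norm, Finset.sum_mul]
  refine Finset.sum_le_sum fun i _ => ?_
  rw [l1norm, Finset.sum_mul]
  have habs : |(Θ *ᵥ (Bᵀ *ᵥ w)) i| ≤ ∑ l, |Θ i l * (Bᵀ *ᵥ w) l| :=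
    Finset.abs_sum_le_sum_abs (fun l => Θ i l * (Bᵀ *ᵥ w) l) Finset.univ
  refine habs.trans (Finset.sum_le_sum fun l _ => ?_)
  rw [abs_mul]
  exact mul_le_mul_of_nonneg_left (hentry l) (abs_nonneg _)
end

section
/- Let Σ_ε = B^T Σ_W B + Σ_E where B ∈ R^{K×m} has rank K, Σ_W is symmetric positive definite, and Σ_E is symmetric positive semidefinite. Let U_K ∈ R^{m×K} contain the K leading orthonormal eigenvectors of Σ_ε and let P_B = B^T(BB^T)^{-1}B. Then ‖U_K U_K^T - P_B‖_op ≤ √2 ‖Σ_E‖_op / λ_K(B^T Σ_W B), where λ_K denotes the K-th largest eigenvalue. -/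
/-!
The bound holds even without the factor `√2`. Put `A = Bᵀ Σ_W B`, `P = U Uᵀ`, `Q = P_B` and
`λ = λ_K(A)`. Since `A` is positive on the row space of `B`, Courant–Fischer gives `λ > 0`
(`eigDesc_pos`), and since `Σ_E` is positive semidefinite, Weyl monotonicity (`eigDesc_le_add`)
shows that the leading `K` eigenvalues `M` of `A + Σ_E` are all at least `λ`.

From `(1 - Q) A = 0` and `(A + Σ_E) U = U M` one gets `(1 - Q) U = (1 - Q) Σ_E U M⁻¹`, so that
`‖(1 - Q) P‖ ≤ ‖Σ_E‖ / λ`. Finally `P` and `Q` are orthogonal projections of the same rank `K`,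
for which `‖P - Q‖` is at most any bound on `‖(1 - Q) P‖` (`norm_proj_sub_le`).
-/

open Matrix MeasureTheory

/-! ### Pairs of orthogonal projections of equal rank -/

/-- Pythagoras for an orthogonal projection, given as a symmetric idempotent map. -/
lemma proj_pythagoras {E : Type*} [NormedAddCommGroup E] [InnerProductSpace ℝ E]
    (P : E →ₗ[ℝ] E) (hP : P.IsSymmetric) (hP2 : ∀ x, P (P x) = P x) (x : E) :
    ‖x‖ ^ 2 = ‖P x‖ ^ 2 + ‖x - P x‖ ^ 2 := by
  have h1 : inner ℝ x (P x) = ‖P x‖ ^ 2 := by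
    rw [← hP2 x, ← hP x (P x), hP2, real_inner_self_eq_norm_sq]
  rw [norm_sub_sq_real, h1]
  ring

/-- If two orthogonal projections have equal rank and every vector of `range P` is within relative
distance `s` of `range Q`, then conversely every vector of `range Q` is within relative distance
`s` of `range P`. For `s < 1`, equality of ranks makes `Q : range P → range Q` onto. -/
lemma proj_gap_symm {E : Type*} [NormedAddCommGroup E] [InnerProductSpace ℝ E]
    [FiniteDimensional ℝ E] (P Q : E →ₗ[ℝ] E) (hP : P.IsSymmetric) (hP2 : ∀ x, P (P x) = P x)
    (hQ : Q.IsSymmetric) (hQ2 : ∀ x, Q (Q x) = Q x)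
    (hr : Module.finrank ℝ (LinearMap.range P) = Module.finrank ℝ (LinearMap.range Q))
    (s : ℝ) (hs : 0 ≤ s) (h : ∀ x, ‖P x - Q (P x)‖ ≤ s * ‖P x‖) (y : E) :
    ‖Q y - P (Q y)‖ ≤ s * ‖Q y‖ := by
  have hpy := proj_pythagoras P hP hP2 (Q y)
  rcases le_or_gt 1 s with h1 | h1
  · have : ‖Q y - P (Q y)‖ ≤ ‖Q y‖ :=
      abs_le_of_sq_le_sq' (by nlinarith [sq_nonneg ‖P (Q y)‖]) (norm_nonneg _) |>.2
    nlinarith [norm_nonneg (Q y)]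
  let f : LinearMap.range P →ₗ[ℝ] LinearMap.range Q :=
    Q.rangeRestrict ∘ₗ (LinearMap.range P).subtype
  have hinj : Function.Injective f := by
    rw [← LinearMap.ker_eq_bot, LinearMap.ker_eq_bot']
    rintro ⟨_, x, rfl⟩ hx
    have hx0 : Q (P x) = 0 := congrArg Subtype.val hx
    have hb := h x
    rw [hx0, sub_zero] at hb
    have : ‖P x‖ = 0 := by nlinarith [norm_nonneg (P x)]
    exact Subtype.ext (norm_eq_zero.mp this)
  obtain ⟨⟨_, x, rfl⟩, hx⟩ :=
    (LinearMap.injective_iff_surjective_of_finrank_eq_finrank hr).mp hinj ⟨Q y, y, rfl⟩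
  have hxy : Q (P x) = Q y := congrArg Subtype.val hx
  have hb := h x
  have hpx := proj_pythagoras Q hQ hQ2 (P x)
  rw [hxy] at hb hpx
  have hin : ‖Q y‖ ^ 2 ≤ ‖P x‖ * ‖P (Q y)‖ := by
    have e : inner ℝ (P x) (P (Q y)) = ‖Q y‖ ^ 2 := by
      rw [← hP, hP2, ← hxy, ← hQ2 (P x), ← hQ (P x), hQ2, real_inner_self_eq_norm_sq]
    rw [← e]
    exact real_inner_le_norm _ _
  rcases eq_or_lt_of_le (norm_nonneg (P x)) with h0 | h0
  · have hx0 : P x = 0 := norm_eq_zero.mp h0.symm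
    have : Q y = 0 := by rw [← hxy, hx0, map_zero]
    simp [this]
  have hsq : ‖P x - Q y‖ ^ 2 ≤ s ^ 2 * ‖P x‖ ^ 2 := by
    rw [← mul_pow]; exact pow_le_pow_left₀ (norm_nonneg _) hb 2
  have hlow : (1 - s ^ 2) * ‖P x‖ ^ 2 ≤ ‖Q y‖ ^ 2 := by linarith
  have hkey : (1 - s ^ 2) * ‖Q y‖ ^ 2 ≤ ‖P (Q y)‖ ^ 2 := by
    have h4 : ‖Q y‖ ^ 2 * ‖Q y‖ ^ 2 ≤ ‖P x‖ ^ 2 * ‖P (Q y)‖ ^ 2 := by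
      have := mul_self_le_mul_self (sq_nonneg _) hin
      nlinarith
    have h5 := mul_le_mul_of_nonneg_right hlow (sq_nonneg ‖Q y‖)
    refine le_of_mul_le_mul_left ?_ (pow_pos h0 2)
    linarith
  refine abs_le_of_sq_le_sq' ?_ (by positivity) |>.2
  rw [mul_pow]
  linarith

/-- For equal-rank orthogonal projections, `‖P - Q‖` is controlled by `‖(1 - Q) P‖`. -/
lemma norm_proj_sub_le {E : Type*} [NormedAddCommGroup E] [InnerProductSpace ℝ E]
    [FiniteDimensional ℝ E] (P Q : E →ₗ[ℝ] E) (hP : P.IsSymmetric) (hP2 : ∀ x, P (P x) = P x)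
    (hQ : Q.IsSymmetric) (hQ2 : ∀ x, Q (Q x) = Q x)
    (hr : Module.finrank ℝ (LinearMap.range P) = Module.finrank ℝ (LinearMap.range Q))
    (s : ℝ) (hs : 0 ≤ s) (h : ∀ x, ‖P x - Q (P x)‖ ≤ s * ‖P x‖) (v : E) :
    ‖P v - Q v‖ ≤ s * ‖v‖ := by
  have hQP := proj_gap_symm P Q hP hP2 hQ hQ2 hr s hs h v
  set u := v - Q v with hu
  set w := P u with hw
  have hQu : Q u = 0 := by rw [hu, map_sub, hQ2, sub_self]
  -- `‖P (1 - Q)‖ ≤ s` by duality with `‖(1 - Q) P‖ ≤ s`.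
  have hPu : ‖w‖ ≤ s * ‖u‖ := by
    have e : ‖w‖ ^ 2 = inner ℝ (w - Q w) u := by
      rw [inner_sub_left, hQ w u, hQu, inner_zero_right, sub_zero,
        ← real_inner_self_eq_norm_sq, hw, ← hP (P u) u, hP2]
    have h1 := real_inner_le_norm (w - Q w) u
    have h2 : ‖w - Q w‖ ≤ s * ‖w‖ := h u
    have h3 : ‖w‖ * ‖w‖ ≤ ‖w‖ * (s * ‖u‖) := by
      nlinarith [mul_le_mul_of_nonneg_right h2 (norm_nonneg u)]
    rcases eq_or_lt_of_le (norm_nonneg w) with h0 | h0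
    · rw [← h0]; positivity
    · exact le_of_mul_le_mul_left h3 h0
  have hdec : P v - Q v = w - (Q v - P (Q v)) := by
    rw [hw, hu, map_sub]; abel
  have horth : inner ℝ w (Q v - P (Q v)) = 0 := by
    rw [hw, hP, map_sub, hP2, sub_self, inner_zero_right]
  have hsum : ‖P v - Q v‖ ^ 2 = ‖w‖ ^ 2 + ‖Q v - P (Q v)‖ ^ 2 := by
    rw [hdec, norm_sub_sq_real, horth]; ring
  have hv := proj_pythagoras Q hQ hQ2 v
  have a1 := pow_le_pow_left₀ (norm_nonneg _) hPu 2
  have a2 := pow_le_pow_left₀ (norm_nonneg _) hQP 2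
  refine abs_le_of_sq_le_sq' ?_ (by positivity) |>.2
  rw [mul_pow] at *
  rw [hsum, hv]
  linarith

/-! ### Courant–Fischer and Weyl monotonicity for sorted eigenvalues -/

/-- `eigDesc A` is antitone and belongs to an orthonormal eigenbasis. -/
lemma eigDesc_spec {n : ℕ} (A : Matrix (Fin n) (Fin n) ℝ) (hA : A.IsHermitian) :
    Antitone (eigDesc A) ∧ ∃ b : OrthonormalBasis (Fin n) ℝ (EuclideanSpace ℝ (Fin n)),
      ∀ i, Matrix.toEuclideanLin A (b i) = eigDesc A i • b i := by
  have e : eigDesc A = sortedDesc hA.eigenvalues := dif_pos hA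
  rw [e]
  refine ⟨fun i j hij => Tuple.monotone_sort hA.eigenvalues (Fin.rev_le_rev.mpr hij), ?_⟩
  refine ⟨hA.eigenvectorBasis.reindex ((Tuple.sort hA.eigenvalues).symm.trans Fin.revPerm), ?_⟩
  intro i
  simp only [OrthonormalBasis.reindex_apply, sortedDesc, Function.comp_apply]
  have := hA.mulVec_eigenvectorBasis (Tuple.sort hA.eigenvalues i.rev)
  rw [Matrix.toLpLin_apply]
  exact congrArg (WithLp.toLp 2) this

/-- The quadratic form in an eigenbasis. -/
lemma inner_eigenbasis {n : ℕ} {T : EuclideanSpace ℝ (Fin n) →ₗ[ℝ] EuclideanSpace ℝ (Fin n)}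
    {d : Fin n → ℝ} (b : OrthonormalBasis (Fin n) ℝ (EuclideanSpace ℝ (Fin n)))
    (hb : ∀ i, T (b i) = d i • b i) (x : EuclideanSpace ℝ (Fin n)) :
    inner ℝ x (T x) = ∑ i, d i * (inner ℝ (b i) x) ^ 2 := by
  conv_lhs => rw [← b.sum_repr' x, map_sum, b.sum_repr' x, inner_sum]
  refine Finset.sum_congr rfl fun i _ => ?_
  rw [map_smul, hb, inner_smul_right, inner_smul_right, real_inner_comm]
  ring

/-- Half of Courant–Fischer: a subspace of dimension greater than `k` contains a nonzero vector
with Rayleigh quotient at most `eigDesc A k` (indices counted from `0`). -/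
lemma exists_rayleigh_le {n : ℕ} (A : Matrix (Fin n) (Fin n) ℝ) (hA : A.IsHermitian) (k : Fin n)
    (V : Submodule ℝ (EuclideanSpace ℝ (Fin n))) (hV : (k : ℕ) < Module.finrank ℝ V) :
    ∃ x ∈ V, x ≠ 0 ∧ inner ℝ x (Matrix.toEuclideanLin A x) ≤ eigDesc A k * ‖x‖ ^ 2 := by
  obtain ⟨hanti, b, hb⟩ := eigDesc_spec A hA
  -- A dimension count gives a vector of `V` orthogonal to the first `k` eigenvectors.
  let f : V →ₗ[ℝ] (Fin k → ℝ) :=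
    LinearMap.pi fun i => (innerₛₗ ℝ (b (Fin.castLE k.2.le i))) ∘ₗ V.subtype
  have hker : LinearMap.ker f ≠ ⊥ := LinearMap.ker_ne_bot_of_finrank_lt (by simpa using hV)
  obtain ⟨x, hx, hx0⟩ := Submodule.exists_mem_ne_zero_of_ne_bot hker
  refine ⟨x, x.2, fun h => hx0 (Subtype.ext h), ?_⟩
  rw [inner_eigenbasis b hb, ← b.sum_sq_inner_right, Finset.mul_sum]
  refine Finset.sum_le_sum fun i _ => ?_
  rcases lt_or_ge i k with hik | hik
  · have h0 : inner ℝ (b i) (x : EuclideanSpace ℝ (Fin n)) = 0 :=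
      congrFun (LinearMap.mem_ker.mp hx) ⟨i, hik⟩
    simp [h0]
  · exact mul_le_mul_of_nonneg_right (hanti hik) (sq_nonneg _)

/-- Half of Courant–Fischer: the first `k + 1` eigenvectors span a subspace on which the Rayleigh
quotient is at least `eigDesc A k` (indices counted from `0`). -/
lemma exists_subspace_rayleigh_ge {n : ℕ} (A : Matrix (Fin n) (Fin n) ℝ) (hA : A.IsHermitian)
    (k : Fin n) :
    ∃ V : Submodule ℝ (EuclideanSpace ℝ (Fin n)), (k : ℕ) < Module.finrank ℝ V ∧
      ∀ x ∈ V, eigDesc A k * ‖x‖ ^ 2 ≤ inner ℝ x (Matrix.toEuclideanLin A x) := by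
  obtain ⟨hanti, b, hb⟩ := eigDesc_spec A hA
  let g : Set.Iic k → EuclideanSpace ℝ (Fin n) := fun i => b i
  refine ⟨Submodule.span ℝ (Set.range g), ?_, ?_⟩
  · have hli : LinearIndependent ℝ g :=
      b.orthonormal.linearIndependent.comp _ Subtype.val_injective
    rw [finrank_span_eq_card hli]
    simp
  · intro x hx
    have h0 : ∀ i, k < i → inner ℝ (b i) x = 0 := by
      intro i hi
      have hle : Submodule.span ℝ (Set.range g) ≤ LinearMap.ker (innerₛₗ ℝ (b i)) := by
        rw [Submodule.span_le]
        rintro _ ⟨j, rfl⟩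
        exact b.orthonormal.2 (ne_of_gt (lt_of_le_of_lt j.2 hi))
      exact hle hx
    rw [inner_eigenbasis b hb, ← b.sum_sq_inner_right, Finset.mul_sum]
    refine Finset.sum_le_sum fun i _ => ?_
    rcases le_or_gt i k with hik | hik
    · exact mul_le_mul_of_nonneg_right (hanti hik) (sq_nonneg _)
    · simp [h0 i hik]

lemma inner_toEuclideanLin {n : ℕ} (A : Matrix (Fin n) (Fin n) ℝ) (x : EuclideanSpace ℝ (Fin n)) :
    inner ℝ x (Matrix.toEuclideanLin A x) = x.ofLp ⬝ᵥ (A *ᵥ x.ofLp) := by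
  rw [EuclideanSpace.inner_eq_star_dotProduct, Matrix.ofLp_toLpLin, Matrix.toLin'_apply,
    star_trivial, dotProduct_comm]

/-- Weyl monotonicity: adding a positive semidefinite matrix does not decrease eigenvalues. -/
lemma eigDesc_le_add {n : ℕ} (A E : Matrix (Fin n) (Fin n) ℝ) (hA : A.IsHermitian)
    (hE : E.PosSemidef) (k : Fin n) : eigDesc A k ≤ eigDesc (A + E) k := by
  obtain ⟨V, hV, hge⟩ := exists_subspace_rayleigh_ge A hA k
  obtain ⟨x, hxV, hx0, hle⟩ := exists_rayleigh_le (A + E) (hA.add hE.1) k V hV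
  have h1 := hge x hxV
  have h2 : 0 ≤ x.ofLp ⬝ᵥ (E *ᵥ x.ofLp) := by
    simpa using hE.dotProduct_mulVec_nonneg x.ofLp
  rw [inner_toEuclideanLin] at h1 hle
  rw [add_mulVec, dotProduct_add] at hle
  have hpos : 0 < ‖x‖ ^ 2 := by positivity
  exact le_of_mul_le_mul_right (by linarith) hpos

/-! ### The row space of `B` and isometries -/

lemma finrank_range_toEuclideanLin {n m : ℕ} (A : Matrix (Fin n) (Fin m) ℝ) :
    Module.finrank ℝ (LinearMap.range (Matrix.toEuclideanLin A)) = A.rank := by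
  rw [Matrix.toEuclideanLin_eq_toLin_orthonormal]
  exact (Matrix.rank_eq_finrank_range_toLin _ _ _).symm

lemma isUnit_gram {m K : ℕ} (B : Matrix (Fin K) (Fin m) ℝ) (hB : B.rank = K) :
    IsUnit (B * Bᵀ) := by
  have hr : (B * Bᵀ).rank = K := by rw [rank_self_mul_transpose, hB]
  rw [← Matrix.mulVec_surjective_iff_isUnit]
  have : LinearMap.range (B * Bᵀ).mulVecLin = ⊤ :=
    Submodule.eq_top_of_finrank_eq (by simpa [Matrix.rank] using hr)
  exact LinearMap.range_eq_top.mp this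

/-- The `K` leading eigenvalues of `Bᵀ W B` are positive: the form is positive on the `K`-dimensional row
space of `B`, so some nonzero vector there has positive Rayleigh quotient bounded by it. -/
lemma eigDesc_pos {m K : ℕ} (k : Fin m) (hk : (k : ℕ) < K) (B : Matrix (Fin K) (Fin m) ℝ)
    (hB : B.rank = K) (W : Matrix (Fin K) (Fin K) ℝ) (hW : W.PosDef)
    (hA : (Bᵀ * W * B).IsHermitian) : 0 < eigDesc (Bᵀ * W * B) k := by
  obtain ⟨x, ⟨y, rfl⟩, hx0, hle⟩ := exists_rayleigh_le (Bᵀ * W * B) hA k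
    (LinearMap.range (Matrix.toEuclideanLin Bᵀ))
    (by rw [finrank_range_toEuclideanLin, rank_transpose, hB]; exact hk)
  set x := Matrix.toEuclideanLin Bᵀ y with hx
  have hxv : x.ofLp = Bᵀ *ᵥ y.ofLp := rfl
  have hBx : B *ᵥ x.ofLp ≠ 0 := by
    intro h
    rw [hxv, mulVec_mulVec] at h
    have hy : y.ofLp = 0 :=
      Matrix.mulVec_injective_iff_isUnit.mpr (isUnit_gram B hB) (by rw [h, mulVec_zero])
    apply hx0
    apply (WithLp.ofLp_injective 2)
    rw [hxv, hy, mulVec_zero]; rfl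
  have hpos := hW.dotProduct_mulVec_pos hBx
  have e : x.ofLp ⬝ᵥ ((Bᵀ * W * B) *ᵥ x.ofLp)
      = (B *ᵥ x.ofLp) ⬝ᵥ (W *ᵥ (B *ᵥ x.ofLp)) := by
    rw [Matrix.mul_assoc, ← mulVec_mulVec, dotProduct_mulVec, vecMul_transpose, mulVec_mulVec]
  rw [inner_toEuclideanLin, e] at hle
  rw [star_trivial] at hpos
  have hn : 0 < ‖x‖ ^ 2 := by positivity
  by_contra hcon
  nlinarith [not_lt.mp hcon]

lemma norm_toEuclideanLin_of_orth {m K : ℕ} (U : Matrix (Fin m) (Fin K) ℝ) (hU : Uᵀ * U = 1)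
    (z : EuclideanSpace ℝ (Fin K)) : ‖Matrix.toEuclideanLin U z‖ = ‖z‖ := by
  have h : ‖Matrix.toEuclideanLin U z‖ ^ 2 = ‖z‖ ^ 2 := by
    rw [← real_inner_self_eq_norm_sq, ← real_inner_self_eq_norm_sq,
      EuclideanSpace.inner_eq_star_dotProduct, EuclideanSpace.inner_eq_star_dotProduct,
      Matrix.ofLp_toLpLin, Matrix.toLin'_apply, star_trivial, star_trivial, dotProduct_mulVec,
      ← mulVec_transpose, mulVec_mulVec, hU, one_mulVec]
  exact (sq_eq_sq₀ (norm_nonneg _) (norm_nonneg _)).mp h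

/-! ### The perturbation bound -/

/-- Davis–Kahan bound: the projection onto the span of the K leading orthonormal
eigenvectors of `Σ_ε = Bᵀ Σ_W B + Σ_E` satisfies
`‖U_K U_Kᵀ - P_B‖_op ≤ √2 ‖Σ_E‖_op / λ_K(Bᵀ Σ_W B)`. -/
theorem stmt9 (m K : ℕ) (hK : 0 < K) (hKm : K ≤ m)
    (B : Matrix (Fin K) (Fin m) ℝ) (hB : B.rank = K)
    (SW : Matrix (Fin K) (Fin K) ℝ) (hSW : SW.PosDef)
    (SE : Matrix (Fin m) (Fin m) ℝ) (hSE : SE.PosSemidef)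
    (U : Matrix (Fin m) (Fin K) ℝ)
    (hUorth : Uᵀ * U = (1 : Matrix (Fin K) (Fin K) ℝ))
    (μvals : Fin K → ℝ)
    (hUeig : (Bᵀ * SW * B + SE) * U = U * Matrix.diagonal μvals)
    (hlead : ∀ k : Fin K, μvals k = eigDesc (Bᵀ * SW * B + SE) (Fin.castLE hKm k)) :
    opNorm (U * Uᵀ - Bᵀ * (B * Bᵀ)⁻¹ * B) ≤
      Real.sqrt 2 * opNorm SE / eigDesc (Bᵀ * SW * B) ⟨K - 1, by omega⟩ := by
  have hA : (Bᵀ * SW * B).IsHermitian := by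
    simpa using Matrix.isHermitian_conjTranspose_mul_mul B hSW.1
  have hlam := eigDesc_pos ⟨K - 1, by omega⟩ (Nat.sub_lt hK one_pos) B hB SW hSW hA
  set lam := eigDesc (Bᵀ * SW * B) ⟨K - 1, by omega⟩ with hlamdef
  have hmu : ∀ k, lam ≤ μvals k := by
    intro k
    rw [hlead, hlamdef]
    refine le_trans ((eigDesc_spec _ hA).1 ?_) (eigDesc_le_add _ SE hA hSE _)
    rw [Fin.le_def]
    simp only [Fin.val_castLE]
    omega
  have hG := isUnit_gram B hB
  have hGdet : IsUnit (B * Bᵀ).det := (Matrix.isUnit_iff_isUnit_det _).mp hG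
  have hE0 : 0 ≤ opNorm SE := norm_nonneg _
  have hSEle : ∀ x, ‖Matrix.toEuclideanLin SE x‖ ≤ opNorm SE * ‖x‖ := fun x =>
    (LinearMap.toContinuousLinearMap (Matrix.toEuclideanLin SE)).le_opNorm x
  set Q := Bᵀ * (B * Bᵀ)⁻¹ * B with hQdef
  set P := U * Uᵀ with hPdef
  have hQB : Q * Bᵀ = Bᵀ := by
    rw [hQdef, Matrix.mul_assoc, Matrix.mul_assoc, Matrix.nonsing_inv_mul _ hGdet, Matrix.mul_one]
  have hPU : P * U = U := by rw [hPdef, Matrix.mul_assoc, hUorth, Matrix.mul_one]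
  have hQQ : Q * Q = Q := by
    conv_lhs => rhs; rw [hQdef]
    rw [← Matrix.mul_assoc, ← Matrix.mul_assoc, hQB]
  have hPP : P * P = P := by
    conv_lhs => rhs; rw [hPdef]
    rw [← Matrix.mul_assoc, hPU]
  have hPH : P.IsHermitian := by
    rw [Matrix.IsHermitian, conjTranspose_eq_transpose_of_trivial, hPdef, transpose_mul,
      transpose_transpose]
  have hQH : Q.IsHermitian := by
    rw [Matrix.IsHermitian, conjTranspose_eq_transpose_of_trivial, hQdef, transpose_mul,
      transpose_mul, transpose_transpose, transpose_nonsing_inv, transpose_mul,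
      transpose_transpose, Matrix.mul_assoc]
  have hQr : Q.rank = K := by
    apply le_antisymm
    · exact (rank_mul_le_right _ _).trans hB.le
    · have := rank_mul_le_left Q Bᵀ
      rwa [hQB, rank_transpose, hB] at this
  have hPr : P.rank = K := by
    rw [hPdef, rank_self_mul_transpose, ← rank_transpose_mul_self, hUorth, rank_one, Fintype.card_fin]
  have hid : ∀ M : Matrix (Fin m) (Fin m) ℝ, M * M = M → ∀ x,
      Matrix.toEuclideanLin M (Matrix.toEuclideanLin M x) = Matrix.toEuclideanLin M x := by
    intro M hM x
    rw [← LinearMap.comp_apply, ← Matrix.toLpLin_mul, hM]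
  -- `(1 - Q) U = (1 - Q) SE U M⁻¹` with `M = diagonal μvals`, since `(1 - Q) Bᵀ = 0`.
  have hsin : ∀ x, ‖Matrix.toEuclideanLin P x - Matrix.toEuclideanLin Q (Matrix.toEuclideanLin P x)‖
      ≤ opNorm SE / lam * ‖Matrix.toEuclideanLin P x‖ := by
    intro x
    let y : EuclideanSpace ℝ (Fin K) := Matrix.toEuclideanLin Uᵀ x
    let z : EuclideanSpace ℝ (Fin K) := WithLp.toLp 2 fun k => (μvals k)⁻¹ * y k
    have hyx : Matrix.toEuclideanLin P x = Matrix.toEuclideanLin U y := by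
      rw [hPdef, Matrix.toLpLin_mul (q := 2)]; rfl
    have hMz : diagonal μvals *ᵥ z.ofLp = y.ofLp := by
      funext k
      have : μvals k ≠ 0 := (hlam.trans_le (hmu k)).ne'
      rw [mulVec_diagonal]
      simp [z, this]
    have hz : ‖z‖ ≤ ‖y‖ / lam := by
      have h2 : ‖z‖ ^ 2 ≤ (‖y‖ / lam) ^ 2 := by
        rw [div_pow, EuclideanSpace.real_norm_sq_eq, EuclideanSpace.real_norm_sq_eq,
          Finset.sum_div]
        refine Finset.sum_le_sum fun k _ => ?_
        have e : z k = (μvals k)⁻¹ * y k := rfl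
        rw [e, mul_pow, inv_pow, div_eq_inv_mul]
        refine mul_le_mul_of_nonneg_right ?_ (sq_nonneg _)
        exact inv_anti₀ (by positivity) (pow_le_pow_left₀ hlam.le (hmu k) 2)
      exact abs_le_of_sq_le_sq' h2 (by positivity) |>.2
    set w := Matrix.toEuclideanLin SE (Matrix.toEuclideanLin U z) with hw
    have hdecomp : Matrix.toEuclideanLin U y
        = Matrix.toEuclideanLin (Bᵀ * SW * B) (Matrix.toEuclideanLin U z) + w := by
      apply WithLp.ofLp_injective 2
      change U *ᵥ y.ofLp = (Bᵀ * SW * B) *ᵥ (U *ᵥ z.ofLp) + SE *ᵥ (U *ᵥ z.ofLp)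
      rw [← add_mulVec, mulVec_mulVec, hUeig, ← mulVec_mulVec, hMz]
    have hQA : Matrix.toEuclideanLin Q
        (Matrix.toEuclideanLin (Bᵀ * SW * B) (Matrix.toEuclideanLin U z))
        = Matrix.toEuclideanLin (Bᵀ * SW * B) (Matrix.toEuclideanLin U z) := by
      rw [← LinearMap.comp_apply, ← Matrix.toLpLin_mul, ← Matrix.mul_assoc, ← Matrix.mul_assoc, hQB]
    have hres : Matrix.toEuclideanLin U y - Matrix.toEuclideanLin Q (Matrix.toEuclideanLin U y)
        = w - Matrix.toEuclideanLin Q w := by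
      rw [hdecomp, map_add, hQA]; abel
    rw [hyx, hres, norm_toEuclideanLin_of_orth U hUorth]
    have hpy := proj_pythagoras _ (Matrix.isSymmetric_toEuclideanLin_iff.mpr hQH) (hid Q hQQ) w
    have h1 : ‖w - Matrix.toEuclideanLin Q w‖ ≤ ‖w‖ :=
      abs_le_of_sq_le_sq' (by nlinarith [sq_nonneg ‖Matrix.toEuclideanLin Q w‖])
        (norm_nonneg _) |>.2
    have h2 : ‖w‖ ≤ opNorm SE * ‖z‖ := by
      have := hSEle (Matrix.toEuclideanLin U z)
      rwa [norm_toEuclideanLin_of_orth U hUorth] at this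
    calc _ ≤ opNorm SE * ‖z‖ := h1.trans h2
      _ ≤ opNorm SE * (‖y‖ / lam) := mul_le_mul_of_nonneg_left hz hE0
      _ = _ := by ring
  have hs0 : 0 ≤ opNorm SE / lam := div_nonneg hE0 hlam.le
  have hbound : opNorm (P - Q) ≤ opNorm SE / lam := by
    refine ContinuousLinearMap.opNorm_le_bound _ hs0 fun v => ?_
    have := norm_proj_sub_le _ _ (Matrix.isSymmetric_toEuclideanLin_iff.mpr hPH) (hid P hPP)
      (Matrix.isSymmetric_toEuclideanLin_iff.mpr hQH) (hid Q hQQ)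
      (by rw [finrank_range_toEuclideanLin, finrank_range_toEuclideanLin, hPr, hQr])
      _ hs0 hsin v
    rwa [← LinearMap.sub_apply, ← map_sub] at this
  have hsqrt : (1 : ℝ) ≤ Real.sqrt 2 := by
    rw [Real.one_le_sqrt]; norm_num
  calc _ ≤ opNorm SE / lam := hbound
    _ ≤ Real.sqrt 2 * (opNorm SE / lam) := le_mul_of_one_le_left hs0 hsqrt
    _ = _ := (mul_div_assoc _ _ _).symm
end
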